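/- Let n ≥ 3, δ := e^{−3}, f(x) := χ_{B_β(0,δ)}(x) / ( |x|_β² · |log |x|_β|⁶ ), and η_β(r) := sup_{x∈ℝⁿ} ∫_{{y : |x−y|_β < r}} f(y) / |x−y|_β^{n−2} dy. Then there exists a constant C = C(n,β) > 0 such that for every r ∈ (0, δ), ∫₀^r η_β(ρ)^{1/4} / ρ dρ ≤ C · (−log r)^{−1/4}; in particular ∫₀^r ρ^{−1} η_β(ρ)^{1/4} dρ < +∞. -/

import Mathlib

open MeasureTheory Real Set Filter Topology

/-- The non-isotropic β-distance of `x` to the origin: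
`|x|_β = (∑ k, |x k| ^ (1/β k)) ^ ((β₁+⋯+βₙ)/n)`. -/
noncomputable def betaDist (n : ℕ) (β : Fin n → ℝ) (x : Fin n → ℝ) : ℝ :=
  (∑ k, |x k| ^ (1 / β k)) ^ ((∑ k, β k) / n)

/-- The example function `f(x) = χ_{B_β(0,e⁻³)}(x) / (|x|_β² |log |x|_β|⁶)`. -/
noncomputable def fex (n : ℕ) (β : Fin n → ℝ) (x : Fin n → ℝ) : ℝ :=
  Set.indicator {z : Fin n → ℝ | betaDist n β z < Real.exp (-3)}
    (fun z => 1 / (betaDist n β z ^ (2:ℝ) * |Real.log (betaDist n β z)| ^ (6:ℝ))) x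

/-- The Stummel modulus (with `p = 2`-type kernel `|x-y|_β^{n-2}`) of `fex`:
`η_β(r) = sup_x ∫_{|x-y|_β<r} fex(y)/|x-y|_β^{n-2} dy`. -/
noncomputable def etaEx (n : ℕ) (β : Fin n → ℝ) (r : ℝ) : ℝ :=
  ⨆ x : Fin n → ℝ, ∫ y in {y : Fin n → ℝ | betaDist n β (x - y) < r},
    fex n β y / betaDist n β (x - y) ^ ((n:ℝ) - 2)


lemma betaDist_nonneg (n : ℕ) (β : Fin n → ℝ) (x : Fin n → ℝ) : 0 ≤ betaDist n β x := by
  unfold betaDist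
  positivity

lemma betaDist_meas (n : ℕ) (β : Fin n → ℝ) : Measurable (betaDist n β) := by
  unfold betaDist
  fun_prop

lemma fex_meas (n : ℕ) (β : Fin n → ℝ) : Measurable (fex n β) := by
  have hN := betaDist_meas n β
  have : fex n β = Set.indicator {z : Fin n → ℝ | betaDist n β z < Real.exp (-3)}
    (fun z => 1 / (betaDist n β z ^ (2:ℝ) * |Real.log (betaDist n β z)| ^ (6:ℝ))) := rfl
  rw [this]
  refine Measurable.indicator ?_ (measurableSet_lt hN measurable_const)
  fun_prop

lemma fex_nonneg (n : ℕ) (β : Fin n → ℝ) (x : Fin n → ℝ) : 0 ≤ fex n β x := by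
  unfold fex
  refine Set.indicator_nonneg (fun z _ => ?_) x
  have := betaDist_nonneg n β z
  positivity

/-- the integrand `h`. -/
noncomputable def hh (n : ℕ) (t : ℝ) : ℝ := 1 / (t ^ n * |Real.log t| ^ 6)

lemma hh_meas (n : ℕ) : Measurable (hh n) := by
  unfold hh
  fun_prop

lemma phi_mono {t u : ℝ} (ht : 0 < t) (htu : t ≤ u) (hu : u < Real.exp (-3)) :
    t ^ 2 * |Real.log t| ^ 6 ≤ u ^ 2 * |Real.log u| ^ 6 := by
  have hu0 : 0 < u := ht.trans_le htu
  have h1 : Real.log u < -3 := by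
    rw [Real.log_lt_iff_lt_exp hu0]; exact hu
  have h2 : Real.log t ≤ Real.log u := Real.log_le_log ht htu
  rw [abs_of_neg (by linarith), abs_of_neg (by linarith)]
  set a := -Real.log u with ha
  set b := -Real.log t with hb
  have hte : t = Real.exp (-b) := by rw [hb, neg_neg, Real.exp_log ht]
  have hue : u = Real.exp (-a) := by rw [ha, neg_neg, Real.exp_log hu0]
  have hab : b ≤ a * Real.exp ((b - a) / 3) := by
    have := Real.add_one_le_exp ((b - a) / 3)
    have h3 : a * ((b - a) / 3 + 1) ≤ a * Real.exp ((b - a) / 3) :=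
      mul_le_mul_of_nonneg_left this (by linarith)
    nlinarith
  have h6 : b ^ 6 ≤ (a * Real.exp ((b - a) / 3)) ^ 6 := by
    apply pow_le_pow_left₀ (by linarith) hab
  calc t ^ 2 * b ^ 6 ≤ t ^ 2 * (a * Real.exp ((b - a) / 3)) ^ 6 := by gcongr
    _ = u ^ 2 * a ^ 6 := by
      rw [hte, hue, mul_pow, ← Real.exp_nat_mul, ← Real.exp_nat_mul, ← Real.exp_nat_mul]
      rw [mul_left_comm, ← Real.exp_add, mul_comm]
      congr 2
      push_cast
      ring

lemma log_abs_pos {t : ℝ} (ht : 0 < t) (hu : t < Real.exp (-3)) : 0 < |Real.log t| := by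
  have h1 : Real.log t < -3 := by
    rw [Real.log_lt_iff_lt_exp ht]; exact hu
  rw [abs_pos]; linarith

lemma hh_anti {n : ℕ} (hn : 3 ≤ n) {t u : ℝ} (ht : 0 < t) (htu : t ≤ u)
    (hu : u < Real.exp (-3)) : hh n u ≤ hh n t := by
  unfold hh
  have hu0 : 0 < u := ht.trans_le htu
  have hl := log_abs_pos ht (htu.trans_lt hu)
  apply one_div_le_one_div_of_le (by positivity)
  obtain ⟨m, rfl⟩ := Nat.exists_eq_add_of_le (show 2 ≤ n by omega)
  have := phi_mono ht htu hu
  calc t ^ (2 + m) * |Real.log t| ^ 6 = t ^ m * (t ^ 2 * |Real.log t| ^ 6) := by ring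
    _ ≤ u ^ m * (u ^ 2 * |Real.log u| ^ 6) := by gcongr
    _ = _ := by ring

lemma hh_nonneg (n : ℕ) {t : ℝ} (ht : 0 ≤ t) : 0 ≤ hh n t := by
  unfold hh; positivity

lemma hh_zero {n : ℕ} (hn : 3 ≤ n) : hh n 0 = 0 := by
  unfold hh
  simp

/-- pointwise bound -/
lemma pointwise {n : ℕ} (hn : 3 ≤ n) (β : Fin n → ℝ) {ρ : ℝ} (hρ : ρ < Real.exp (-3))
    (x y : Fin n → ℝ) (hxy : betaDist n β (x - y) < ρ) :
    fex n β y / betaDist n β (x - y) ^ ((n:ℝ) - 2) ≤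
      hh n (betaDist n β (x - y)) +
        Set.indicator {z | betaDist n β z < ρ} (fun z => hh n (betaDist n β z)) y := by
  have hA := hh_nonneg n (betaDist_nonneg n β (x - y))
  have hB : 0 ≤ Set.indicator {z | betaDist n β z < ρ} (fun z => hh n (betaDist n β z)) y :=
    Set.indicator_nonneg (fun z _ => hh_nonneg n (betaDist_nonneg n β z)) y
  have hne : (n:ℝ) - 2 ≠ 0 := by
    have : (3:ℝ) ≤ n := by exact_mod_cast hn
    linarith
  have hn2 : (0:ℝ) ≤ (n:ℝ) - 2 := by
    have : (3:ℝ) ≤ n := by exact_mod_cast hn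
    linarith
  rcases (betaDist_nonneg n β (x - y)).eq_or_lt with h0 | h0
  · rw [← h0, Real.zero_rpow hne, div_zero]
    rw [← h0] at hA
    linarith
  unfold fex
  by_cases hy : betaDist n β y < Real.exp (-3)
  swap
  · rw [Set.indicator_of_notMem (by simpa using hy), zero_div]
    linarith
  rw [Set.indicator_of_mem (by simpa using hy)]
  rcases (betaDist_nonneg n β y).eq_or_lt with h1 | h1
  · rw [← h1, Real.zero_rpow (by norm_num), zero_mul, div_zero, zero_div]
    linarith
  have key : ∀ u : ℝ, 0 < u → hh n u = 1 / (u ^ 2 * |Real.log u| ^ 6) / u ^ ((n:ℝ) - 2) := by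
    intro u hu
    unfold hh
    have : u ^ n = u ^ ((n:ℝ) - 2) * u ^ 2 := by
      rw [← Real.rpow_natCast u 2, ← Real.rpow_add hu, ← Real.rpow_natCast]
      congr 1
      push_cast; ring
    rw [this, div_div]
    congr 1
    ring
  have e1 : ∀ u : ℝ, 1 / (u ^ (2:ℝ) * |Real.log u| ^ (6:ℝ)) = 1 / (u ^ 2 * |Real.log u| ^ 6) := by
    intro u
    norm_num [Real.rpow_ofNat]
  rw [e1]
  rcases le_or_gt (betaDist n β (x - y)) (betaDist n β y) with h | h
  · have : 1 / (betaDist n β y ^ 2 * |Real.log (betaDist n β y)| ^ 6) /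
        betaDist n β (x - y) ^ ((n:ℝ) - 2) ≤ hh n (betaDist n β (x - y)) := by
      rw [key _ h0]
      have hl := log_abs_pos h0 (hxy.trans hρ)
      gcongr 1 / ?_ / _
      exact phi_mono h0 h hy
    linarith
  · rw [Set.indicator_of_mem (show y ∈ {z | betaDist n β z < ρ} from h.trans hxy)]
    have : 1 / (betaDist n β y ^ 2 * |Real.log (betaDist n β y)| ^ 6) /
        betaDist n β (x - y) ^ ((n:ℝ) - 2) ≤ hh n (betaDist n β y) := by
      rw [key _ h1]
      gcongr
    linarith

/-- volume of balls -/
lemma vol_ball {n : ℕ} (hn : 3 ≤ n) (β : Fin n → ℝ) (hβ : ∀ k, (1:ℝ)/2 ≤ β k) {s : ℝ}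
    (hs : 0 < s) : volume {z : Fin n → ℝ | betaDist n β z < s} ≤ ENNReal.ofReal (2 ^ n * s ^ n) := by
  have hβ0 : ∀ k, 0 < β k := fun k => lt_of_lt_of_le (by norm_num) (hβ k)
  have hnpos : (0:ℝ) < n := by exact_mod_cast (by omega : 0 < n)
  have hS : 0 < ∑ k, β k := by
    apply Finset.sum_pos (fun k _ => hβ0 k)
    exact ⟨⟨0, by omega⟩, Finset.mem_univ _⟩
  set S := ∑ k, β k with hSdef
  have hsub : {z : Fin n → ℝ | betaDist n β z < s} ⊆
      Set.pi Set.univ (fun k => Set.Ioo (-(s ^ (n * β k / S))) (s ^ (n * β k / S))) := by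
    intro z hz k _
    have hz : betaDist n β z < s := hz
    unfold betaDist at hz
    rw [← hSdef] at hz
    have hle : |z k| ^ (1 / β k) ≤ ∑ k, |z k| ^ (1 / β k) :=
      Finset.single_le_sum (f := fun k => |z k| ^ (1 / β k)) (fun i _ => by positivity)
        (Finset.mem_univ k)
    have h1 : (|z k| ^ (1 / β k)) ^ (S / n) < s :=
      lt_of_le_of_lt (Real.rpow_le_rpow (by positivity) hle (by positivity)) hz
    have hb := hβ0 k
    have h2 : ((|z k| ^ (1 / β k)) ^ (S / n)) ^ (n * β k / S) < s ^ (n * β k / S) :=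
      Real.rpow_lt_rpow (by positivity) h1 (by positivity)
    rw [← Real.rpow_mul (abs_nonneg _), ← Real.rpow_mul (abs_nonneg _)] at h2
    have h3 : 1 / β k * (S / n) * (n * β k / S) = 1 := by
      field_simp
    rw [h3, Real.rpow_one] at h2
    exact abs_lt.mp h2
  refine (measure_mono hsub).trans ?_
  rw [volume_pi_pi]
  simp only [Real.volume_Ioo]
  rw [← ENNReal.ofReal_prod_of_nonneg (fun i _ => by
    have : 0 < s ^ (n * β i / S) := Real.rpow_pos_of_pos hs _
    linarith)]
  apply ENNReal.ofReal_le_ofReal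
  have : ∀ k, s ^ (n * β k / S) - -s ^ (n * β k / S) = 2 * s ^ (n * β k / S) := fun k => by ring
  simp only [this]
  rw [Finset.prod_mul_distrib, ← Real.rpow_sum_of_pos hs, ← Finset.sum_div, ← Finset.mul_sum,
    ← hSdef, mul_div_assoc, div_self hS.ne', mul_one, Real.rpow_natCast]
  simp

/-- one dimensional integral -/
lemma one_dim {p : ℝ} (hp : 0 < p) {r : ℝ} (hr : 0 < r) (hr1 : r < Real.exp (-3)) :
    IntegrableOn (fun t => p * (t⁻¹ * (-Real.log t) ^ (-p - 1))) (Set.Ioc 0 r) ∧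
    ∫ t in (0:ℝ)..r, p * (t⁻¹ * (-Real.log t) ^ (-p - 1)) = (-Real.log r) ^ (-p) := by
  have hlog : ∀ t, 0 < t → t ≤ r → 3 < -Real.log t := by
    intro t ht htr
    have h1 : Real.log t < -3 := by
      rw [Real.log_lt_iff_lt_exp ht]; exact htr.trans_lt hr1
    linarith
  have hd : ∀ t, 0 < t → t ≤ r → HasDerivAt (fun t => (-Real.log t) ^ (-p))
      (p * (t⁻¹ * (-Real.log t) ^ (-p - 1))) t := by
    intro t ht htr
    have h1 := (Real.hasDerivAt_log ht.ne').neg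
    have h2 := h1.rpow_const (p := -p) (Or.inl (by have := hlog t ht htr; simp only [Pi.neg_apply]; linarith))
    have h3 : -t⁻¹ * -p * (-Real.log t) ^ (-p - 1) = p * (t⁻¹ * (-Real.log t) ^ (-p - 1)) := by
      ring
    rw [← h3]
    exact h2
  have hc : ContinuousOn (fun t => (-Real.log t) ^ (-p)) (Set.Icc 0 r) := by
    intro t ht
    rcases ht.1.eq_or_lt with h | h
    · subst h
      rw [ContinuousWithinAt]
      have hz : (-Real.log 0) ^ (-p) = 0 := by
        rw [Real.log_zero, neg_zero, Real.zero_rpow (by linarith)]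
      rw [hz]
      have h1 : Tendsto (fun t => (-Real.log t) ^ (-p)) (𝓝[≠] (0:ℝ)) (𝓝 0) :=
        (tendsto_rpow_neg_atTop hp).comp (tendsto_neg_atBot_atTop.comp Real.tendsto_log_nhdsNE_zero)
      have h2 : Tendsto (fun t => (-Real.log t) ^ (-p)) (𝓝 (0:ℝ)) (𝓝 0) := by
        have h3 : 𝓝 (0:ℝ) = 𝓝[≠] 0 ⊔ pure 0 := (nhdsNE_sup_pure 0).symm
        refine (Tendsto.sup h1 ?_).mono_left h3.le
        rw [tendsto_pure_left]
        intro s hs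
        rw [hz]
        exact mem_of_mem_nhds hs
      exact h2.mono_left nhdsWithin_le_nhds
    · exact (hd t h ht.2).continuousAt.continuousWithinAt
  have hi : IntegrableOn (fun t => p * (t⁻¹ * (-Real.log t) ^ (-p - 1))) (Set.Ioc 0 r) := by
    refine intervalIntegral.integrableOn_deriv_of_nonneg hc (fun t ht => hd t ht.1 ht.2.le) ?_
    intro t ht
    have := hlog t ht.1 ht.2.le
    have h0 := ht.1
    have : 0 ≤ (-Real.log t) ^ (-p - 1) := Real.rpow_nonneg (by linarith) _
    positivity
  refine ⟨hi, ?_⟩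
  rw [intervalIntegral.integral_eq_sub_of_hasDerivAt_of_le hr.le hc
    (fun t ht => hd t ht.1 ht.2.le)
    ((intervalIntegrable_iff_integrableOn_Ioc_of_le hr.le).2 hi)]
  simp only [Real.log_zero, neg_zero]
  rw [Real.zero_rpow (by linarith), sub_zero]

lemma hh_ball_le {n : ℕ} (hn : 3 ≤ n) {ρ u : ℝ} (hρ : ρ < Real.exp (-3)) (hu : 0 ≤ u)
    (huρ : u < ρ) :
    ENNReal.ofReal (hh n u) ≤ 2 * ∫⁻ t in Set.Ioo 0 ρ,
      Set.indicator {t | u < 2 * t} (fun t => ENNReal.ofReal (hh n t / t)) t := by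
  rcases hu.eq_or_lt with h | h
  · rw [← h, hh_zero hn]; simp
  have hmeas : Measurable (fun t => Set.indicator {t | u < 2 * t}
      (fun t => ENNReal.ofReal (hh n t / t)) t) := by
    refine Measurable.indicator ?_ (measurableSet_lt (by fun_prop) (by fun_prop))
    exact ((hh_meas n).div measurable_id).ennreal_ofReal
  have h1 : ∫⁻ t in Set.Ioo (u / 2) u, ENNReal.ofReal (hh n u / u) ≤ ∫⁻ t in Set.Ioo 0 ρ,
      Set.indicator {t | u < 2 * t} (fun t => ENNReal.ofReal (hh n t / t)) t := by
    refine le_trans ?_ (lintegral_mono_set (show Set.Ioo (u/2) u ⊆ Set.Ioo 0 ρ from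
      Set.Ioo_subset_Ioo (by positivity) huρ.le))
    refine setLIntegral_mono hmeas ?_
    intro t ht
    have ht0 : 0 < t := lt_trans (by positivity) ht.1
    rw [Set.indicator_of_mem (show t ∈ {t | u < 2 * t} by
      have := ht.1
      show u < 2 * t
      linarith)]
    apply ENNReal.ofReal_le_ofReal
    have h3 := hh_anti hn ht0 ht.2.le (huρ.trans hρ)
    have h4 := hh_nonneg n hu
    exact div_le_div₀ (h4.trans h3) h3 ht0 ht.2.le
  refine le_trans ?_ (mul_le_mul_right h1 2)
  rw [setLIntegral_const, Real.volume_Ioo, ← ENNReal.ofReal_mul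
    (div_nonneg (hh_nonneg n hu) hu), show (2 : ENNReal) = ENNReal.ofReal 2 by simp,
    ← ENNReal.ofReal_mul (by norm_num)]
  apply ENNReal.ofReal_le_ofReal
  apply le_of_eq
  field_simp
  ring

lemma J_le {n : ℕ} (hn : 3 ≤ n) (β : Fin n → ℝ) (hβ : ∀ k, (1:ℝ)/2 ≤ β k) {ρ : ℝ}
    (hρ0 : 0 < ρ) (hρ : ρ < Real.exp (-3)) :
    ∫⁻ z in {z | betaDist n β z < ρ}, ENNReal.ofReal (hh n (betaDist n β z)) ≤
      ENNReal.ofReal (2 * 4 ^ n * (-Real.log ρ) ^ (-5:ℝ)) := by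
  have hN := betaDist_meas n β
  have hSm : MeasurableSet {z | betaDist n β z < ρ} := measurableSet_lt hN measurable_const
  have hF : Measurable (fun q : (Fin n → ℝ) × ℝ => Set.indicator {t | betaDist n β q.1 < 2 * t}
      (fun t => ENNReal.ofReal (hh n t / t)) q.2) := by
    have : (fun q : (Fin n → ℝ) × ℝ => Set.indicator {t | betaDist n β q.1 < 2 * t}
      (fun t => ENNReal.ofReal (hh n t / t)) q.2) =
      Set.indicator {q : (Fin n → ℝ) × ℝ | betaDist n β q.1 < 2 * q.2}
        (fun q => ENNReal.ofReal (hh n q.2 / q.2)) := by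
      ext q; rfl
    rw [this]
    refine Measurable.indicator ?_ (measurableSet_lt (by fun_prop) (by fun_prop))
    exact (((hh_meas n).comp measurable_snd).div measurable_snd).ennreal_ofReal
  calc ∫⁻ z in {z | betaDist n β z < ρ}, ENNReal.ofReal (hh n (betaDist n β z))
      ≤ ∫⁻ z in {z | betaDist n β z < ρ}, 2 * ∫⁻ t in Set.Ioo 0 ρ,
        Set.indicator {t | betaDist n β z < 2 * t} (fun t => ENNReal.ofReal (hh n t / t)) t := by
        refine setLIntegral_mono' hSm ?_
        intro z hz
        exact hh_ball_le hn hρ (betaDist_nonneg n β z) hz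
    _ = 2 * ∫⁻ t in Set.Ioo 0 ρ, ∫⁻ z in {z | betaDist n β z < ρ},
        Set.indicator {t | betaDist n β z < 2 * t} (fun t => ENNReal.ofReal (hh n t / t)) t := by
        rw [lintegral_const_mul' _ _ (by simp), lintegral_lintegral_swap hF.aemeasurable]
    _ ≤ 2 * ∫⁻ t in Set.Ioo 0 ρ, ENNReal.ofReal (4 ^ n * (t⁻¹ * (-Real.log t) ^ (-5 - 1 : ℝ))) := by
        gcongr 2 * ?_
        refine setLIntegral_mono' measurableSet_Ioo ?_
        intro t ht
        have ht0 := ht.1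
        have hlt : Real.log t < -3 := by
          rw [Real.log_lt_iff_lt_exp ht0]; exact ht.2.trans hρ
        refine (setLIntegral_le_lintegral _ _).trans ?_
        have e : ∀ z, Set.indicator {t | betaDist n β z < 2 * t}
            (fun t => ENNReal.ofReal (hh n t / t)) t =
            Set.indicator {z | betaDist n β z < 2 * t} (fun _ => ENNReal.ofReal (hh n t / t)) z := by
          intro z; rfl
        simp only [e]
        rw [lintegral_indicator (measurableSet_lt hN measurable_const), setLIntegral_const]
        refine (mul_le_mul_right (vol_ball hn β hβ (by positivity)) _).trans ?_
        rw [← ENNReal.ofReal_mul (div_nonneg (hh_nonneg n ht0.le) ht0.le)]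
        apply ENNReal.ofReal_le_ofReal
        apply le_of_eq
        unfold hh
        rw [abs_of_neg (by linarith)]
        rw [show (-5 - 1 : ℝ) = -((6:ℕ):ℝ) by norm_num, Real.rpow_neg (by linarith),
          Real.rpow_natCast]
        rw [show (4:ℝ) = 2 * 2 by norm_num]
        have : 0 < -Real.log t := by linarith
        generalize -Real.log t = L at *
        rw [mul_pow, mul_pow]
        field_simp
    _ ≤ ENNReal.ofReal (2 * 4 ^ n * (-Real.log ρ) ^ (-5:ℝ)) := by
        obtain ⟨hi, hv⟩ := one_dim (p := 5) (by norm_num) hρ0 hρ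
        rw [intervalIntegral.integral_of_le hρ0.le] at hv
        have hnn : ∀ t ∈ Set.Ioc 0 ρ, 0 ≤ 5 * (t⁻¹ * (-Real.log t) ^ (-5 - 1 : ℝ)) := by
          intro t ht
          have ht0 := ht.1
          have hlt : Real.log t < -3 := by
            rw [Real.log_lt_iff_lt_exp ht0]; exact ht.2.trans_lt hρ
          have : 0 ≤ (-Real.log t) ^ (-5 - 1 : ℝ) := Real.rpow_nonneg (by linarith) _
          positivity
        have h1 : ∫⁻ t in Set.Ioc 0 ρ, ENNReal.ofReal (5 * (t⁻¹ * (-Real.log t) ^ (-5 - 1 : ℝ))) =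
            ENNReal.ofReal ((-Real.log ρ) ^ (-5:ℝ)) := by
          rw [← hv]
          rw [ofReal_integral_eq_lintegral_ofReal hi]
          exact (ae_restrict_iff' measurableSet_Ioc).2 (Filter.Eventually.of_forall hnn)
        have h2 : ∫⁻ t in Set.Ioo 0 ρ, ENNReal.ofReal (4 ^ n * (t⁻¹ * (-Real.log t) ^ (-5 - 1 : ℝ)))
            ≤ ENNReal.ofReal (4 ^ n) * ENNReal.ofReal ((-Real.log ρ) ^ (-5:ℝ)) := by
          rw [← h1, ← lintegral_const_mul' _ _ (by simp)]
          refine (lintegral_mono_set Set.Ioo_subset_Ioc_self).trans ?_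
          refine setLIntegral_mono' measurableSet_Ioc ?_
          intro t ht
          rw [← ENNReal.ofReal_mul (by positivity)]
          apply ENNReal.ofReal_le_ofReal
          have := hnn t ht
          exact mul_le_mul_of_nonneg_left (by linarith) (by positivity)
        refine (mul_le_mul_right h2 2).trans ?_
        rw [show (2 : ENNReal) = ENNReal.ofReal 2 by simp,
          ← ENNReal.ofReal_mul (by positivity), ← ENNReal.ofReal_mul (by norm_num), mul_assoc]

lemma lint_le {n : ℕ} (hn : 3 ≤ n) (β : Fin n → ℝ) (hβ : ∀ k, (1:ℝ)/2 ≤ β k) {ρ : ℝ}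
    (hρ0 : 0 < ρ) (hρ : ρ < Real.exp (-3)) (x : Fin n → ℝ) :
    ∫⁻ y in {y | betaDist n β (x - y) < ρ},
      ENNReal.ofReal (fex n β y / betaDist n β (x - y) ^ ((n:ℝ) - 2)) ≤
      ENNReal.ofReal (4 * 4 ^ n * (-Real.log ρ) ^ (-5:ℝ)) := by
  have hN := betaDist_meas n β
  have hSm : MeasurableSet {z | betaDist n β z < ρ} := measurableSet_lt hN measurable_const
  have hSx : MeasurableSet {y | betaDist n β (x - y) < ρ} :=
    measurableSet_lt (by fun_prop) measurable_const
  have hJ := J_le hn β hβ hρ0 hρ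
  set J := ∫⁻ z in {z | betaDist n β z < ρ}, ENNReal.ofReal (hh n (betaDist n β z)) with hJd
  have h1 : ∫⁻ y in {y | betaDist n β (x - y) < ρ},
      ENNReal.ofReal (hh n (betaDist n β (x - y))) = J := by
    rw [hJd, ← lintegral_indicator hSm, ← lintegral_indicator hSx]
    exact lintegral_sub_left_eq_self (μ := volume) (Set.indicator {z | betaDist n β z < ρ}
      (fun z => ENNReal.ofReal (hh n (betaDist n β z)))) x
  have h2 : ∫⁻ y in {y | betaDist n β (x - y) < ρ}, ENNReal.ofReal
      (Set.indicator {z | betaDist n β z < ρ} (fun z => hh n (betaDist n β z)) y) ≤ J := by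
    refine (setLIntegral_le_lintegral _ _).trans ?_
    rw [hJd, ← lintegral_indicator hSm]
    refine lintegral_mono ?_
    intro y
    by_cases hy : y ∈ {z | betaDist n β z < ρ}
    · simp only [Set.indicator_of_mem hy]; exact le_rfl
    · simp only [Set.indicator_of_notMem hy]; simp
  calc _ ≤ ∫⁻ y in {y | betaDist n β (x - y) < ρ},
        (ENNReal.ofReal (hh n (betaDist n β (x - y))) + ENNReal.ofReal
      (Set.indicator {z | betaDist n β z < ρ} (fun z => hh n (betaDist n β z)) y)) := by
        refine setLIntegral_mono' hSx ?_
        intro y hy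
        rw [← ENNReal.ofReal_add (hh_nonneg n (betaDist_nonneg n β _))
          (Set.indicator_nonneg (fun z _ => hh_nonneg n (betaDist_nonneg n β z)) y)]
        exact ENNReal.ofReal_le_ofReal (pointwise hn β hρ x y hy)
    _ ≤ J + J := by
        rw [lintegral_add_left]
        · exact add_le_add h1.le h2
        · exact ((hh_meas n).comp (hN.comp (measurable_const.sub measurable_id))).ennreal_ofReal
    _ ≤ _ := by
        have hlt : Real.log ρ < -3 := by
          rw [Real.log_lt_iff_lt_exp hρ0]; exact hρ
        have : 0 ≤ (-Real.log ρ) ^ (-5 : ℝ) := Real.rpow_nonneg (by linarith) _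
        refine (add_le_add hJ hJ).trans ?_
        rw [← ENNReal.ofReal_add (by positivity) (by positivity)]
        apply ENNReal.ofReal_le_ofReal
        apply le_of_eq
        ring

lemma integrand_nonneg (n : ℕ) (β : Fin n → ℝ) (x y : Fin n → ℝ) :
    0 ≤ fex n β y / betaDist n β (x - y) ^ ((n:ℝ) - 2) :=
  div_nonneg (fex_nonneg n β y) (Real.rpow_nonneg (betaDist_nonneg n β _) _)

lemma integrand_meas (n : ℕ) (β : Fin n → ℝ) (x : Fin n → ℝ) :
    Measurable (fun y => fex n β y / betaDist n β (x - y) ^ ((n:ℝ) - 2)) := by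
  have hN := betaDist_meas n β
  have hf := fex_meas n β
  fun_prop

lemma integrand_integrable {n : ℕ} (hn : 3 ≤ n) (β : Fin n → ℝ) (hβ : ∀ k, (1:ℝ)/2 ≤ β k) {ρ : ℝ}
    (hρ0 : 0 < ρ) (hρ : ρ < Real.exp (-3)) (x : Fin n → ℝ) :
    IntegrableOn (fun y => fex n β y / betaDist n β (x - y) ^ ((n:ℝ) - 2))
      {y | betaDist n β (x - y) < ρ} := by
  refine ⟨(integrand_meas n β x).aestronglyMeasurable, ?_⟩
  rw [hasFiniteIntegral_iff_ofReal (Filter.Eventually.of_forall (integrand_nonneg n β x))]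
  exact (lint_le hn β hβ hρ0 hρ x).trans_lt ENNReal.ofReal_lt_top

lemma int_le {n : ℕ} (hn : 3 ≤ n) (β : Fin n → ℝ) (hβ : ∀ k, (1:ℝ)/2 ≤ β k) {ρ : ℝ}
    (hρ0 : 0 < ρ) (hρ : ρ < Real.exp (-3)) (x : Fin n → ℝ) :
    ∫ y in {y | betaDist n β (x - y) < ρ},
      fex n β y / betaDist n β (x - y) ^ ((n:ℝ) - 2) ≤
      4 * 4 ^ n * (-Real.log ρ) ^ (-5:ℝ) := by
  have hlt : Real.log ρ < -3 := by
    rw [Real.log_lt_iff_lt_exp hρ0]; exact hρ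
  have : 0 ≤ (-Real.log ρ) ^ (-5 : ℝ) := Real.rpow_nonneg (by linarith) _
  rw [integral_eq_lintegral_of_nonneg_ae
    (Filter.Eventually.of_forall (integrand_nonneg n β x))
    (integrand_meas n β x).aestronglyMeasurable]
  exact ENNReal.toReal_le_of_le_ofReal (by positivity) (lint_le hn β hβ hρ0 hρ x)

lemma eta_nonneg (n : ℕ) (β : Fin n → ℝ) (ρ : ℝ) : 0 ≤ etaEx n β ρ := by
  unfold etaEx
  exact Real.iSup_nonneg (fun x => integral_nonneg (integrand_nonneg n β x))

lemma eta_le {n : ℕ} (hn : 3 ≤ n) (β : Fin n → ℝ) (hβ : ∀ k, (1:ℝ)/2 ≤ β k) {ρ : ℝ}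
    (hρ0 : 0 < ρ) (hρ : ρ < Real.exp (-3)) :
    etaEx n β ρ ≤ 4 * 4 ^ n * (-Real.log ρ) ^ (-5:ℝ) := by
  unfold etaEx
  exact ciSup_le (int_le hn β hβ hρ0 hρ)

lemma eta_mono {n : ℕ} (hn : 3 ≤ n) (β : Fin n → ℝ) (hβ : ∀ k, (1:ℝ)/2 ≤ β k) {ρ σ : ℝ}
    (hρσ : ρ ≤ σ) (hσ0 : 0 < σ) (hσ : σ < Real.exp (-3)) :
    etaEx n β ρ ≤ etaEx n β σ := by
  unfold etaEx
  refine ciSup_mono ⟨_, Set.forall_mem_range.2 (int_le hn β hβ hσ0 hσ)⟩ ?_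
  intro x
  refine setIntegral_mono_set (integrand_integrable hn β hβ hσ0 hσ x)
    (Filter.Eventually.of_forall (integrand_nonneg n β x)) ?_
  exact Filter.Eventually.of_forall (fun y hy => lt_of_lt_of_le hy hρσ)

/-- for the example function, `∫₀^r η_β(ρ)^{1/4}/ρ dρ ≤ C (-log r)^{-1/4}`
for `r ∈ (0, e⁻³)`; in particular this integral is finite. -/
theorem example_function_dini_condition
    (n : ℕ) (hn : 3 ≤ n) (β : Fin n → ℝ) (hβ : ∀ k, (1:ℝ)/2 ≤ β k) :
    ∃ C > 0, ∀ r : ℝ, 0 < r → r < Real.exp (-3) →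
      IntegrableOn (fun ρ => etaEx n β ρ ^ ((1:ℝ)/4) / ρ) (Set.Ioc (0:ℝ) r) ∧
      (∫ ρ in (0:ℝ)..r, etaEx n β ρ ^ ((1:ℝ)/4) / ρ) ≤ C * (-Real.log r) ^ (-(1:ℝ)/4) := by
  set A : ℝ := (4 * 4 ^ n) ^ ((1:ℝ)/4) with hA
  have hA0 : 0 < A := by positivity
  refine ⟨4 * A, by positivity, ?_⟩
  intro r hr hr1
  obtain ⟨hi, hv⟩ := one_dim (p := 1/4) (by norm_num) hr hr1
  have hi' : IntegrableOn (fun t => 4 * A * (1/4 * (t⁻¹ * (-Real.log t) ^ (-(1/4) - 1 : ℝ))))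
    (Set.Ioc 0 r) := hi.const_mul (4 * A)
  have hb : ∀ t ∈ Set.Ioc 0 r, etaEx n β t ^ ((1:ℝ)/4) / t ≤
      4 * A * (1/4 * (t⁻¹ * (-Real.log t) ^ (-(1/4) - 1 : ℝ))) := by
    intro t ht
    have ht0 := ht.1
    have hlt : Real.log t < -3 := by
      rw [Real.log_lt_iff_lt_exp ht0]; exact ht.2.trans_lt hr1
    have h1 := Real.rpow_le_rpow (eta_nonneg n β t) (eta_le hn β hβ ht0 (ht.2.trans_lt hr1))
      (show (0:ℝ) ≤ 1/4 by norm_num)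
    rw [Real.mul_rpow (by positivity) (Real.rpow_nonneg (by linarith) _), ← hA,
      ← Real.rpow_mul (by linarith), show (-5:ℝ) * (1/4) = -(1/4) - 1 by norm_num] at h1
    calc _ ≤ A * (-Real.log t) ^ (-(1/4) - 1 : ℝ) / t := by gcongr
      _ = _ := by ring
  have hm : AEStronglyMeasurable (fun ρ => etaEx n β ρ ^ ((1:ℝ)/4) / ρ)
      (volume.restrict (Set.Ioc 0 r)) := by
    have hmono : MonotoneOn (etaEx n β) (Set.Ioc 0 r) := fun a _ b hb hab =>
      eta_mono hn β hβ hab hb.1 (hb.2.trans_lt hr1)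
    have := aemeasurable_restrict_of_monotoneOn (μ := volume) measurableSet_Ioc hmono
    exact ((this.pow_const _).div aemeasurable_id).aestronglyMeasurable
  have hint : IntegrableOn (fun ρ => etaEx n β ρ ^ ((1:ℝ)/4) / ρ) (Set.Ioc (0:ℝ) r) := by
    refine Integrable.mono' hi' hm ?_
    refine (ae_restrict_iff' measurableSet_Ioc).2 (Filter.Eventually.of_forall ?_)
    intro t ht
    rw [Real.norm_of_nonneg (div_nonneg (Real.rpow_nonneg (eta_nonneg n β t) _) ht.1.le)]
    exact hb t ht
  refine ⟨hint, ?_⟩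
  rw [intervalIntegral.integral_of_le hr.le] at hv ⊢
  refine (setIntegral_mono_on hint hi' measurableSet_Ioc hb).trans ?_
  rw [integral_const_mul, hv, neg_div]
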